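/- arXiv:math/0703900 — 3 statements merged into one kernel-verified Lean document; each statement's English description precedes it below -/
import Mathlib

section
/- The number of permutations of a 4n-card deck (n ranks, 4 suits) in which no card is replaced by a card of the same rank equals ∑_{m0+m1+m2+m3+m4=n} (-1)^{m1+m3} * multinomial(n; m0,m1,m2,m3,m4) * 16^{m1} * 72^{m2} * 96^{m3} * 24^{m4} * (4n - (m1 + 2m2 + 3m3 + 4m4))!. -/
/-- The number of rank-derangements of a deck with `n` ranks and 4 suits:
permutations of `Fin n × Fin 4` (first coordinate = rank) such that every card
is sent to a card of a different rank. -/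
def R (n : ℕ) : ℕ :=
  (Finset.univ.filter fun σ : Equiv.Perm (Fin n × Fin 4) => ∀ c, (σ c).1 ≠ c.1).card

open Finset in
theorem RD_count {α : Type*} [Fintype α] [DecidableEq α] (f : α → Option α)
    (hf : ∀ a b, (f a).isSome → f a = f b → a = b) :
    #{σ : Equiv.Perm α | ∀ a b, f a = some b → σ a = b} =
      Nat.factorial (Fintype.card α - #{a | (f a).isSome}) := by
  classical
  let g : {a // (f a).isSome} → α := fun a => (f a.1).get a.2
  have hg : Function.Injective g := by
    intro a b h
    apply Subtype.ext
    apply hf _ _ a.2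
    rw [← Option.some_get a.2, ← Option.some_get b.2]
    exact congrArg some h
  let e : {a // (f a).isSome} ≃ {b // b ∈ Set.range g} := Equiv.ofInjective g hg
  let σ₀ : Equiv.Perm α := e.extendSubtype
  have h0 : ∀ a b, f a = some b → σ₀ a = b := by
    intro a b h
    have ha : (f a).isSome := by simp [h]
    have := Equiv.extendSubtype_apply_of_mem e a ha
    change e.extendSubtype a = b
    rw [this]
    simp [e, g, h]
  have key : #{σ : Equiv.Perm α | ∀ a b, f a = some b → σ a = b} =
      Fintype.card {τ : Equiv.Perm α // ∀ a, ¬ (¬ (f a).isSome) → τ a = a} := by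
    rw [Fintype.card_subtype]
    refine Finset.card_bij' (fun σ _ => σ₀⁻¹ * σ) (fun τ _ => σ₀ * τ) ?_ ?_ ?_ ?_
    · intro σ hσ
      simp only [mem_filter, mem_univ, true_and, not_not] at hσ ⊢
      intro a ha
      obtain ⟨b, hb⟩ := Option.isSome_iff_exists.1 ha
      rw [Equiv.Perm.mul_apply, hσ a b hb, Equiv.Perm.inv_eq_iff_eq, h0 a b hb]
    · intro τ hτ
      simp only [mem_filter, mem_univ, true_and, not_not] at hτ ⊢
      intro a b hb
      rw [Equiv.Perm.mul_apply, hτ a (by simp [hb]), h0 a b hb]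
    · intro σ _; simp
    · intro σ _; simp
  rw [key, ← Fintype.card_congr (Equiv.Perm.subtypeEquivSubtypePerm (fun a => ¬ (f a).isSome)),
    Fintype.card_perm, Fintype.card_subtype_compl, Fintype.card_subtype]

def RD_sz (f : Fin 4 → Option (Fin 4)) : ℕ := (Finset.univ.filter fun a => (f a).isSome).card

def RD_inj (f : Fin 4 → Option (Fin 4)) : Prop := ∀ a b, (f a).isSome → f a = f b → a = b

instance : DecidablePred RD_inj := fun f => by unfold RD_inj; infer_instance

theorem RD_sz_le (f : Fin 4 → Option (Fin 4)) : RD_sz f ≤ 4 := by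
  unfold RD_sz
  exact (Finset.card_le_univ _).trans (by simp)

set_option maxRecDepth 100000 in
theorem RD_rook : ∀ k : Fin 5,
    (Finset.univ.filter fun f => RD_inj f ∧ RD_sz f = k).card = ![1, 16, 72, 96, 24] k := by
  decide +kernel

open Finset in
theorem RD_countF (n : ℕ) (F : Fin n → Fin 4 → Option (Fin 4)) :
    #{σ : Equiv.Perm (Fin n × Fin 4) | ∀ r s t, F r s = some t → σ (r, s) = (r, t)} =
      if ∀ r, RD_inj (F r) then Nat.factorial (4 * n - ∑ r, RD_sz (F r)) else 0 := by
  classical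
  split_ifs with h
  · have := RD_count (fun c : Fin n × Fin 4 => (F c.1 c.2).map (fun t => (c.1, t))) (by
      rintro ⟨r, s⟩ ⟨r', s'⟩ h1 h2
      simp only [Option.isSome_map] at h1 h2
      obtain ⟨t, ht⟩ := Option.isSome_iff_exists.1 h1
      rw [ht] at h2
      have h3 := h2.symm
      simp only [Option.map_some, Option.map_eq_some_iff, Prod.mk.injEq] at h3
      obtain ⟨t', h4, rfl, rfl⟩ := h3
      rw [h r' s s' h1 (ht.trans h4.symm)])
    have e1 : #{c : Fin n × Fin 4 | ((F c.1 c.2).map (fun t => (c.1, t))).isSome} =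
        ∑ r, RD_sz (F r) := by
      simp only [RD_sz, Option.isSome_map, Finset.card_filter, Fintype.sum_prod_type]
    rw [e1] at this
    simp only [Fintype.card_prod, Fintype.card_fin] at this
    rw [mul_comm 4 n, ← this]
    congr 1
    ext σ
    simp only [mem_filter, mem_univ, true_and, Option.map_eq_some_iff]
    constructor
    · rintro H ⟨r, s⟩ b ⟨t, ht, rfl⟩
      exact H r s t ht
    · intro H r s t ht
      exact H (r, s) (r, t) ⟨t, ht, rfl⟩
  · rw [Finset.card_eq_zero, Finset.filter_eq_empty_iff]
    intro σ _ H
    apply h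
    intro r a b h1 h2
    obtain ⟨t, ht⟩ := Option.isSome_iff_exists.1 h1
    have := (H r a t ht).trans (H r b t (h2 ▸ ht)).symm
    simpa using σ.injective this

open Finset in
theorem RD_expand (n : ℕ) :
    (R n : ℤ) = ∑ F : Fin n → Fin 4 → Option (Fin 4),
      (∏ r, if RD_inj (F r) then (-1 : ℤ) ^ RD_sz (F r) else 0) *
        (Nat.factorial (4 * n - ∑ r, RD_sz (F r)) : ℤ) := by
  classical
  have h1 : ∀ σ : Equiv.Perm (Fin n × Fin 4), (if ∀ c, (σ c).1 ≠ c.1 then (1 : ℤ) else 0) =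
      ∑ F : Fin n → Fin 4 → Option (Fin 4), (∏ r, (-1 : ℤ) ^ RD_sz (F r)) *
        if ∀ r s t, F r s = some t → σ (r, s) = (r, t) then 1 else 0 := by
    intro σ
    let w : Fin n → Fin 4 → Option (Fin 4) → ℤ := fun r s o =>
      (if o.isSome then -1 else 1) * if ∀ t, o = some t → σ (r, s) = (r, t) then 1 else 0
    have hw : ∀ r s, ∑ o, w r s o = if (σ (r, s)).1 ≠ r then 1 else 0 := by
      intro r s
      rw [Fintype.sum_option]
      simp only [w]
      rcases hσ : σ (r, s) with ⟨a, b⟩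
      by_cases hr : a = r
      · simp [hr]
      · simp [hr]
    have h2 : (if ∀ c, (σ c).1 ≠ c.1 then (1 : ℤ) else 0) = ∏ r, ∏ s, ∑ o, w r s o := by
      simp only [hw, Finset.prod_boole, mem_univ, true_implies, Prod.forall]
    rw [h2]
    simp only [Finset.prod_univ_sum, Fintype.piFinset_univ]
    refine Finset.sum_congr rfl fun F _ => ?_
    simp only [w, Finset.prod_mul_distrib, Finset.prod_boole, mem_univ, true_implies]
    congr 1
    refine Finset.prod_congr rfl fun r _ => ?_
    rw [Finset.prod_ite]
    simp [RD_sz]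
  rw [R, Finset.card_filter]
  push_cast
  rw [Finset.sum_congr rfl fun σ _ => h1 σ, Finset.sum_comm]
  refine Finset.sum_congr rfl fun F _ => ?_
  rw [← Finset.mul_sum]
  have h3 := RD_countF n F
  rw [Finset.card_filter] at h3
  have h4 := congrArg (Nat.cast : ℕ → ℤ) h3
  push_cast at h4
  rw [h4]
  by_cases h : ∀ r, RD_inj (F r)
  · simp [h]
  · rw [if_neg h]
    push Not at h
    obtain ⟨r, hr⟩ := h
    have h5 : (∏ r, if RD_inj (F r) then (-1 : ℤ) ^ RD_sz (F r) else 0) = 0 :=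
      Finset.prod_eq_zero (mem_univ r) (if_neg hr)
    rw [h5, mul_zero, zero_mul]

open Finset Polynomial in
theorem RD_poly : (∑ f : Fin 4 → Option (Fin 4),
      (if RD_inj f then (-1 : ℤ) ^ RD_sz f else 0) • (X : ℤ[X]) ^ RD_sz f) =
    ∑ k : Fin 5, C ((-1 : ℤ) ^ (k : ℕ) * ![1, 16, 72, 96, 24] k) * X ^ (k : ℕ) := by
  rw [← Finset.sum_fiberwise_of_maps_to (s := univ) (t := univ)
    (g := fun f => (⟨RD_sz f, Nat.lt_succ_of_le (RD_sz_le f)⟩ : Fin 5)) (fun _ _ => mem_univ _)]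
  refine Finset.sum_congr rfl fun k _ => ?_
  have : ∀ f ∈ univ.filter (fun f => (⟨RD_sz f, Nat.lt_succ_of_le (RD_sz_le f)⟩ : Fin 5) = k),
      (if RD_inj f then (-1 : ℤ) ^ RD_sz f else 0) • (X : ℤ[X]) ^ RD_sz f =
      if RD_inj f then C ((-1 : ℤ) ^ (k : ℕ)) * X ^ (k : ℕ) else 0 := by
    intro f hf
    have hk : RD_sz f = k := congrArg Fin.val (mem_filter.1 hf).2
    rw [hk]
    split_ifs <;> simp [smul_eq_C_mul]
  rw [Finset.sum_congr rfl this, ← Finset.sum_filter, Finset.sum_const, Finset.filter_filter]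
  have h2 := RD_rook k
  have h3 : (univ.filter fun f => (⟨RD_sz f, Nat.lt_succ_of_le (RD_sz_le f)⟩ : Fin 5) = k ∧
      RD_inj f) = univ.filter fun f => RD_inj f ∧ RD_sz f = k := by
    ext f
    simp [Fin.ext_iff, and_comm]
  rw [h3, h2]
  fin_cases k <;> simp

open Finset Polynomial in
theorem rank_derangements_formula (n : ℕ) :
    (R n : ℤ) = ∑ m ∈ Finset.Nat.antidiagonalTuple 5 n,
      (-1) ^ (m 1 + m 3) * (Nat.multinomial Finset.univ m : ℤ) *
        16 ^ m 1 * 72 ^ m 2 * 96 ^ m 3 * 24 ^ m 4 *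
        (Nat.factorial (4 * n - (m 1 + 2 * m 2 + 3 * m 3 + 4 * m 4)) : ℤ) := by
  let L : ℤ[X] →ₗ[ℤ] ℤ := Polynomial.lsum fun k =>
    LinearMap.mulRight ℤ (Nat.factorial (4 * n - k) : ℤ)
  have hL : ∀ (c : ℤ) k, L (C c * X ^ k) = c * (Nat.factorial (4 * n - k) : ℤ) := by
    intro c k
    rw [C_mul_X_pow_eq_monomial]
    simp [L, Polynomial.lsum_apply, Polynomial.sum_monomial_index]
  have h1 : (R n : ℤ) = L ((∑ f : Fin 4 → Option (Fin 4),
      (if RD_inj f then (-1 : ℤ) ^ RD_sz f else 0) • (X : ℤ[X]) ^ RD_sz f) ^ n) := by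
    rw [RD_expand, Fintype.sum_pow, map_sum]
    refine Finset.sum_congr rfl fun F _ => ?_
    rw [← hL]
    congr 1
    simp only [smul_eq_C_mul, Finset.prod_mul_distrib, map_prod, Finset.prod_pow_eq_pow_sum]
  rw [h1, RD_poly, Finset.sum_pow_eq_sum_piAntidiag, map_sum]
  have h2 : Finset.piAntidiag (univ : Finset (Fin 5)) n = Finset.Nat.antidiagonalTuple 5 n := by
    ext m
    simp [Finset.mem_piAntidiag, Finset.Nat.mem_antidiagonalTuple]
  rw [h2]
  refine Finset.sum_congr rfl fun m _ => ?_
  have h3 : (Nat.multinomial univ m : ℤ[X]) * ∏ k : Fin 5,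
      (C ((-1 : ℤ) ^ (k : ℕ) * ![1, 16, 72, 96, 24] k) * X ^ (k : ℕ)) ^ m k =
      C ((-1) ^ (m 1 + m 3) * (Nat.multinomial Finset.univ m : ℤ) *
        16 ^ m 1 * 72 ^ m 2 * 96 ^ m 3 * 24 ^ m 4) *
        X ^ (m 1 + 2 * m 2 + 3 * m 3 + 4 * m 4) := by
    rw [Fin.prod_univ_five]
    have e : (Nat.multinomial univ m : ℤ[X]) = C (Nat.multinomial univ m : ℤ) := by simp
    rw [e]
    simp only [mul_pow, ← C_pow, ← pow_mul, C_mul, pow_add]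
    have q1 : (-1 : ℤ) ^ (2 * m 2) = 1 := by simp [pow_mul]
    have q2 : (-1 : ℤ) ^ (4 * m 4) = 1 := by rw [pow_mul]; norm_num
    have q3 : (-1 : ℤ) ^ (3 * m 3) = (-1) ^ m 3 := by rw [pow_mul]; norm_num
    have v0 : ((0 : Fin 5) : ℕ) = 0 := rfl
    have v1 : ((1 : Fin 5) : ℕ) = 1 := rfl
    have v2 : ((2 : Fin 5) : ℕ) = 2 := rfl
    have v3 : ((3 : Fin 5) : ℕ) = 3 := rfl
    have v4 : ((4 : Fin 5) : ℕ) = 4 := rfl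
    have w0 : (![1, 16, 72, 96, 24] : Fin 5 → ℤ) 0 = 1 := rfl
    have w1 : (![1, 16, 72, 96, 24] : Fin 5 → ℤ) 1 = 16 := rfl
    have w2 : (![1, 16, 72, 96, 24] : Fin 5 → ℤ) 2 = 72 := rfl
    have w3 : (![1, 16, 72, 96, 24] : Fin 5 → ℤ) 3 = 96 := rfl
    have w4 : (![1, 16, 72, 96, 24] : Fin 5 → ℤ) 4 = 24 := rfl
    simp only [v0, v1, v2, v3, v4, w0, w1, w2, w3, w4, q1, q2, q3, zero_mul, one_mul, pow_zero,
      one_pow, C_1, mul_one]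
    ring
  rw [h3, hL]
end

section
/- R_13/52! < 1/e^4, i.e., the probability of winning frustration solitaire with 13 ranks (a uniformly random permutation of the 52 cards of Fin 13 × Fin 4 having no rank-fixed point) is strictly less than e^{-4}. -/
def HitOn {n : ℕ} (f : Fin n → Finset (Fin 4)) (σ : Equiv.Perm (Fin n × Fin 4)) : Prop :=
  ∀ i, ∀ j ∈ f i, (σ (i, j)).1 = i

instance {n : ℕ} (f : Fin n → Finset (Fin 4)) (σ : Equiv.Perm (Fin n × Fin 4)) :
    Decidable (HitOn f σ) := by unfold HitOn; infer_instance

def extMap {n : ℕ} (f : Fin n → Finset (Fin 4)) (g : ∀ i, (f i) ↪ Fin 4)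
    (x : {c : Fin n × Fin 4 // c.2 ∈ f c.1}) : Fin n × Fin 4 :=
  (x.1.1, g x.1.1 ⟨x.1.2, x.2⟩)

theorem extMap_inj {n : ℕ} (f : Fin n → Finset (Fin 4)) (g : ∀ i, (f i) ↪ Fin 4) :
    Function.Injective (extMap f g) := by
  rintro ⟨⟨a, b⟩, h⟩ ⟨⟨c, d⟩, h'⟩ e
  simp only [extMap, Prod.mk.injEq] at e
  obtain ⟨e1, e2⟩ := e
  subst e1
  have := (g a).injective e2
  simp at this
  simp [this]

theorem card_dom {n : ℕ} (f : Fin n → Finset (Fin 4)) :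
    Fintype.card {c : Fin n × Fin 4 // c.2 ∈ f c.1} = ∑ i, (f i).card := by
  rw [Fintype.card_subtype, Finset.card_filter, Fintype.sum_prod_type]
  simp

theorem card_ext {n : ℕ} (f : Fin n → Finset (Fin 4)) (g : ∀ i, (f i) ↪ Fin 4) :
    (Finset.univ.filter fun σ : Equiv.Perm (Fin n × Fin 4) =>
      ∀ x : {c : Fin n × Fin 4 // c.2 ∈ f c.1}, σ x = extMap f g x).card
      = (∑ i, (4 - (f i).card)).factorial := by
  classical
  let s : Set (Fin n × Fin 4) := {c | c.2 ∈ f c.1}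
  let t : Set (Fin n × Fin 4) := Set.range (extMap f g)
  let e0 : s ≃ t := Equiv.ofInjective (extMap f g) (extMap_inj f g)
  have E := Equiv.Set.compl e0
  have hs : Fintype.card s = ∑ i, (f i).card := card_dom f
  have ht : Fintype.card t = ∑ i, (f i).card := by rw [← hs]; exact (Fintype.card_congr e0).symm
  have hle : ∀ i ∈ Finset.univ, (f i).card ≤ 4 := fun i _ => by
    simpa using Finset.card_le_univ (f i)
  have hk : ∑ i, (4 - (f i).card) = n * 4 - ∑ i, (f i).card := by
    rw [Finset.sum_tsub_distrib _ hle]; simp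
  have hsc : Fintype.card (sᶜ : Set _) = ∑ i, (4 - (f i).card) := by
    rw [Fintype.card_compl_set, hs, hk]; simp
  have htc : Fintype.card (tᶜ : Set _) = ∑ i, (4 - (f i).card) := by
    rw [Fintype.card_compl_set, ht, hk]; simp
  rw [← Fintype.card_subtype]
  have e1 : (sᶜ : Set _) ≃ (tᶜ : Set _) := Fintype.equivOfCardEq (hsc.trans htc.symm)
  rw [← hsc, ← Fintype.card_equiv e1]
  exact Fintype.card_congr E

theorem card_hit {n : ℕ} (f : Fin n → Finset (Fin 4)) :
    (Finset.univ.filter fun σ : Equiv.Perm (Fin n × Fin 4) => HitOn f σ).card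
      = (∏ i, Nat.descFactorial 4 (f i).card) * (∑ i, (4 - (f i).card)).factorial := by
  classical
  have : (Finset.univ.filter fun σ : Equiv.Perm (Fin n × Fin 4) => HitOn f σ)
      = (Finset.univ : Finset (∀ i, (f i) ↪ Fin 4)).biUnion (fun g =>
        Finset.univ.filter fun σ : Equiv.Perm (Fin n × Fin 4) =>
      ∀ x : {c : Fin n × Fin 4 // c.2 ∈ f c.1}, σ x = extMap f g x) := by
    ext σ
    simp only [Finset.mem_filter, Finset.mem_univ, true_and, Finset.mem_biUnion]
    constructor
    · intro h
      refine ⟨fun i => ⟨fun j => (σ (i, j.1)).2, ?_⟩, ?_⟩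
      · intro a b hab
        have : σ (i, a.1) = σ (i, b.1) := Prod.ext ((h i _ a.2).trans (h i _ b.2).symm) hab
        have := σ.injective this
        simp at this
        exact this
      · rintro ⟨⟨i, j⟩, hx⟩
        exact Prod.ext (h i j hx) rfl
    · rintro ⟨g, hg⟩ i j hj
      rw [hg ⟨(i, j), hj⟩]; rfl
  rw [this, Finset.card_biUnion]
  · simp only [card_ext]
    simp [Fintype.card_pi, Fintype.card_embedding_eq]
  · intro g _ g' _ hne
    refine Finset.disjoint_left.2 ?_
    intro σ h1 h2
    simp only [Finset.mem_filter, Finset.mem_univ, true_and] at h1 h2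
    apply hne
    funext i
    ext1 ⟨j, hj⟩
    have := (h1 ⟨(i, j), hj⟩).symm.trans (h2 ⟨(i, j), hj⟩)
    exact (Prod.ext_iff.1 this).2

def wt (T : Finset (Fin 4)) : ℤ := (-1) ^ T.card * (Nat.descFactorial 4 T.card : ℤ)

def NN (n m : ℕ) : ℤ :=
  ∑ f : Fin n → Finset (Fin 4), (∏ i, wt (f i)) * ((m + ∑ i, (4 - (f i).card)).factorial : ℤ)

theorem R_eq (n : ℕ) : (R n : ℤ) = NN n 0 := by
  classical
  have key : ∀ σ : Equiv.Perm (Fin n × Fin 4),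
      (if (∀ c, (σ c).1 ≠ c.1) then (1 : ℤ) else 0) =
      ∑ f : Fin n → Finset (Fin 4), (∏ i, (-1 : ℤ) ^ (f i).card) * (if HitOn f σ then 1 else 0) := by
    intro σ
    have h1 : (if (∀ c, (σ c).1 ≠ c.1) then (1 : ℤ) else 0)
        = ∏ i, ∏ j, (1 + (if (σ (i, j)).1 = i then (-1 : ℤ) else 0)) := by
      split_ifs with h
      · symm
        refine Finset.prod_eq_one fun i _ => Finset.prod_eq_one fun j _ => ?_
        rw [if_neg (h (i, j))]; rfl
      · push Not at h
        obtain ⟨⟨i, j⟩, hc⟩ := h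
        symm
        refine Finset.prod_eq_zero (Finset.mem_univ i) (Finset.prod_eq_zero (Finset.mem_univ j) ?_)
        rw [if_pos hc]; rfl
    rw [h1]
    have h2 : ∀ i, ∏ j, (1 + (if (σ (i, j)).1 = i then (-1 : ℤ) else 0))
        = ∑ T : Finset (Fin 4), ∏ j ∈ T, (if (σ (i, j)).1 = i then (-1 : ℤ) else 0) := by
      intro i
      rw [Finset.prod_one_add]
      simp
    simp_rw [h2]
    rw [Finset.prod_univ_sum]
    simp only [Fintype.piFinset_univ]
    refine Finset.sum_congr rfl fun f _ => ?_
    split_ifs with h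
    · rw [mul_one]
      refine Finset.prod_congr rfl fun i _ => ?_
      rw [Finset.prod_congr rfl (fun j hj => if_pos (h i j hj))]
      simp
    · simp only [HitOn] at h
      push Not at h
      obtain ⟨i, j, hj, hc⟩ := h
      rw [mul_zero]
      exact Finset.prod_eq_zero (Finset.mem_univ i) (Finset.prod_eq_zero hj (if_neg hc))
  unfold R NN
  rw [Finset.card_filter]
  push_cast
  simp_rw [key]
  rw [Finset.sum_comm]
  refine Finset.sum_congr rfl fun f _ => ?_
  rw [← Finset.mul_sum]
  have := card_hit f
  rw [Finset.card_filter] at this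
  have h := congrArg (Nat.cast : ℕ → ℤ) this
  push_cast at h
  rw [h]
  simp only [wt, Finset.prod_mul_distrib, zero_add]
  ring

theorem NN_zero (m : ℕ) : NN 0 m = (m.factorial : ℤ) := by
  simp [NN]

theorem NN_succ (n m : ℕ) : NN (n + 1) m =
    24 * NN n m - 96 * NN n (m + 1) + 72 * NN n (m + 2) - 16 * NN n (m + 3) + NN n (m + 4) := by
  have h1 : NN (n + 1) m = ∑ T : Finset (Fin 4), wt T * NN n (m + (4 - T.card)) := by
    unfold NN
    rw [← (Fin.consEquiv (fun _ => Finset (Fin 4))).sum_comp, Fintype.sum_prod_type]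
    refine Finset.sum_congr rfl fun T _ => ?_
    rw [Finset.mul_sum]
    refine Finset.sum_congr rfl fun f _ => ?_
    simp [Fin.consEquiv, Fin.prod_univ_succ, Fin.sum_univ_succ, mul_assoc, add_assoc]
  rw [h1, ← Finset.powerset_univ, Finset.sum_powerset]
  have h2 : ∀ k, ∑ T ∈ Finset.powersetCard k (Finset.univ : Finset (Fin 4)),
      wt T * NN n (m + (4 - T.card)) =
      (Nat.choose 4 k : ℤ) * (((-1) ^ k * (Nat.descFactorial 4 k : ℤ)) * NN n (m + (4 - k))) := by
    intro k
    rw [Finset.sum_congr rfl (g := fun _ => ((-1) ^ k * (Nat.descFactorial 4 k : ℤ)) * NN n (m + (4 - k)))]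
    · simp
    · intro T hT
      rw [wt, (Finset.mem_powersetCard.1 hT).2]
  simp only [h2]
  simp [Finset.sum_range_succ, Nat.descFactorial, Nat.choose]
  ring

def ladd : List ℤ → List ℤ → List ℤ
  | [], l => l
  | a :: l, [] => a :: l
  | a :: l, b :: l' => (a + b) :: ladd l l'

def lmul : List ℤ → List ℤ
  | [] => []
  | a :: l => ladd [24 * a, -96 * a, 72 * a, -16 * a, a] (0 :: lmul l)

def ev (F : ℕ → ℤ) : List ℤ → ℕ → ℤ
  | [], _ => 0
  | a :: l, m => a * F m + ev F l (m + 1)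

theorem ev_ladd (F : ℕ → ℤ) (l l' : List ℤ) (m : ℕ) :
    ev F (ladd l l') m = ev F l m + ev F l' m := by
  induction l generalizing l' m with
  | nil => simp [ladd, ev]
  | cons a l ih =>
    cases l' with
    | nil => simp [ladd, ev]
    | cons b l' => simp only [ladd, ev, ih]; ring

theorem ev_lmul (n : ℕ) (l : List ℤ) (m : ℕ) :
    ev (NN (n + 1)) l m = ev (NN n) (lmul l) m := by
  induction l generalizing m with
  | nil => rfl
  | cons a l ih =>
    rw [lmul, ev_ladd]
    simp only [ev, ih, NN_succ]
    ring

def lpow : ℕ → List ℤ → List ℤ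
  | 0, l => l
  | n + 1, l => lpow n (lmul l)

theorem ev_lpow (n : ℕ) (l : List ℤ) (m : ℕ) :
    ev (NN n) l m = ev (fun m => (m.factorial : ℤ)) (lpow n l) m := by
  induction n generalizing l with
  | zero =>
    have : NN 0 = fun m => (m.factorial : ℤ) := funext NN_zero
    rw [this]; rfl
  | succ n ih => rw [ev_lmul, ih]; rfl

theorem R13_bound : (R 13 : ℤ) * 1000 < 17 * (Nat.factorial 52 : ℤ) := by
  have h : (R 13 : ℤ) = ev (fun m => (m.factorial : ℤ)) (lpow 13 [1]) 0 := by
    rw [R_eq, ← ev_lpow]; simp [ev]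
  rw [h]
  decide +kernel

theorem frustration_solitaire_lt_exp_neg_four :
    (R 13 : ℝ) / (Nat.factorial 52 : ℝ) < Real.exp (-4) := by
  have h1 : (R 13 : ℝ) * 1000 < 17 * (Nat.factorial 52 : ℝ) := by exact_mod_cast R13_bound
  have hf : (0 : ℝ) < (Nat.factorial 52 : ℝ) := by exact_mod_cast Nat.factorial_pos 52
  have h2 : (R 13 : ℝ) / (Nat.factorial 52 : ℝ) < 17 / 1000 := by
    rw [div_lt_div_iff₀ hf (by norm_num)]; exact h1
  refine h2.trans ?_
  have h3 : Real.exp (-4) = ((Real.exp 1) ^ 4)⁻¹ := by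
    rw [Real.exp_neg, ← Real.exp_nat_mul]; norm_num
  rw [h3]
  have h4 : Real.exp 1 ^ 4 < 2.7182818286 ^ 4 :=
    pow_lt_pow_left₀ Real.exp_one_lt_d9 (Real.exp_pos 1).le (by norm_num)
  rw [lt_inv_comm₀ (by norm_num) (by positivity)]
  refine h4.trans ?_
  norm_num
end

section
/- The sequence p_n = R_n/(4n)! is eventually monotone increasing toward e^{-4}; in particular p_13 < p_20 < p_50 < e^{-4}, where p_13 ≈ 0.016233, p_20 ≈ 0.016954, p_50 ≈ 0.017768. -/
/-- `p n` is the probability that a random permutation of the deck is a rank-derangement. -/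
noncomputable def p (n : ℕ) : ℝ := (R n : ℝ) / (Nat.factorial (4 * n) : ℝ)

namespace RD

open Polynomial Finset

/-- The linear functional sending `X ^ k` to `k!`. -/
noncomputable def E : ℝ[X] →ₗ[ℝ] ℝ := Polynomial.lsum (fun k => (k.factorial : ℝ) • LinearMap.id)

lemma E_monomial (k : ℕ) (a : ℝ) : E (monomial k a) = a * k.factorial := by
  simp [E, Polynomial.lsum_apply, mul_comm]

lemma E_CX (k : ℕ) (a : ℝ) : E (C a * X ^ k) = a * k.factorial := by
  rw [C_mul_X_pow_eq_monomial, E_monomial]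

lemma E_C_mul (a : ℝ) (f : ℝ[X]) : E (C a * f) = a * E f := by
  rw [← smul_eq_C_mul, map_smul, smul_eq_mul]

lemma E_deriv (f : ℝ[X]) : E f = f.coeff 0 + E (derivative f) := by
  induction f using Polynomial.induction_on' with
  | add p q hp hq => rw [map_add, derivative_add, map_add, coeff_add, hp, hq]; ring
  | monomial n a =>
    rw [derivative_monomial, E_monomial, E_monomial]
    rcases n with _ | n
    · simp
    · simp [coeff_monomial, Nat.factorial_succ]; ring

/-- The Laguerre polynomial. -/
noncomputable def Lg : ℝ[X] := C 24 + C (-96) * X + C 72 * X ^ 2 + C (-16) * X ^ 3 + X ^ 4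

/-- The moments. -/
noncomputable def e (j n : ℕ) : ℝ := E (X ^ j * Lg ^ n)

/-- Rank-preserving on `S`. -/
def N {n : ℕ} (S : Finset (Fin n × Fin 4)) : Finset (Equiv.Perm (Fin n × Fin 4)) :=
  univ.filter fun σ => ∀ c ∈ S, (σ c).1 = c.1

/-- number of elements of `S` of rank `r`. -/
def s {n : ℕ} (S : Finset (Fin n × Fin 4)) (r : Fin n) : ℕ := (S.filter fun c => c.1 = r).card

lemma N_count {n : ℕ} (S : Finset (Fin n × Fin 4)) (σ) (h : σ ∈ N S) (r : Fin n) :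
    ((univ \ S).filter fun c => (σ c).1 = r).card + s S r = 4 := by
  have h1 : s S r = (S.filter fun c => (σ c).1 = r).card := by
    unfold s
    congr 1
    apply Finset.filter_congr
    intro c hc
    simp only [N, mem_filter, mem_univ, true_and] at h
    rw [h c hc]
  rw [h1, ← Finset.card_union_of_disjoint, ← Finset.filter_union,
    Finset.sdiff_union_of_subset (subset_univ S)]
  · have : (univ.filter fun c => (σ c).1 = r) = (univ : Finset (Fin 4)).image
      (fun k => σ.symm (r, k)) := by
      ext c
      simp only [mem_filter, mem_univ, true_and, mem_image]
      constructor
      · intro hc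
        exact ⟨(σ c).2, by rw [Equiv.symm_apply_eq, ← hc]⟩
      · rintro ⟨k, hk⟩
        rw [← hk]; simp
    rw [this, Finset.card_image_of_injective]
    · simp
    · intro a b hab
      simpa using hab
  · exact Finset.disjoint_filter_filter Finset.sdiff_disjoint

lemma N_step {n : ℕ} (S : Finset (Fin n × Fin 4)) (c) (hc : c ∉ S) :
    (N (insert c S)).card * (4 * n - S.card) = (N S).card * (4 - s S c.1) := by
  have h1 : ∑ σ ∈ N S, ((univ \ S).filter fun d => (σ d).1 = c.1).card =
      (N S).card * (4 - s S c.1) := by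
    rw [Finset.sum_const_nat]
    intro σ hσ
    have := N_count S σ hσ c.1
    omega
  rw [← h1]
  simp_rw [Finset.card_filter]
  rw [Finset.sum_comm]
  simp_rw [← Finset.card_filter]
  rw [Finset.sum_const_nat (m := (N (insert c S)).card)]
  · rw [Finset.card_sdiff_of_subset (subset_univ S)]
    simp [mul_comm]
  · intro d hd
    have hd : d ∉ S := by simpa using hd
    apply Finset.card_bij' (fun σ _ => Equiv.swap c d |>.trans σ) (fun σ _ => Equiv.swap c d |>.trans σ)
    · intro σ hσ
      simp only [N, mem_filter, mem_univ, true_and, mem_insert, forall_eq_or_imp] at hσ ⊢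
      refine ⟨by simpa using hσ.2, fun a ha => ?_⟩
      rw [Equiv.trans_apply, Equiv.swap_apply_of_ne_of_ne (by rintro rfl; exact hc ha)
        (by rintro rfl; exact hd ha)]
      exact hσ.1 a ha
    · intro σ hσ
      simp only [N, mem_filter, mem_univ, true_and, mem_insert, forall_eq_or_imp] at hσ ⊢
      refine ⟨fun a ha => ?_, by simpa using hσ.1⟩
      rw [Equiv.trans_apply, Equiv.swap_apply_of_ne_of_ne (by rintro rfl; exact hc ha)
        (by rintro rfl; exact hd ha)]
      exact hσ.2 a ha
    · intro σ _; ext1 x; simp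
    · intro σ _; ext1 x; simp

lemma s_insert {n : ℕ} (S : Finset (Fin n × Fin 4)) (c) (hc : c ∉ S) (r) :
    s (insert c S) r = s S r + if r = c.1 then 1 else 0 := by
  unfold s
  rw [Finset.filter_insert]
  split_ifs with h1 h2 h2
  · rw [Finset.card_insert_of_notMem (by simp [hc])]
  · exact absurd h1.symm h2
  · exact absurd h2.symm h1
  · rfl

lemma N_card {n : ℕ} (S : Finset (Fin n × Fin 4)) :
    (N S).card = (4 * n - S.card).factorial * ∏ r, Nat.descFactorial 4 (s S r) := by
  induction S using Finset.induction_on with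
  | empty => simp [N, s, Fintype.card_perm, mul_comm]
  | insert c S hc ih =>
    have h := N_step S c hc
    have hlt : (insert c S).card ≤ 4 * n := by
      simpa [mul_comm] using Finset.card_le_univ (insert c S)
    rw [Finset.card_insert_of_notMem hc] at hlt ⊢
    obtain ⟨m, hm⟩ : ∃ m, 4 * n - S.card = m + 1 := ⟨4 * n - S.card - 1, by omega⟩
    have hm' : 4 * n - (S.card + 1) = m := by omega
    rw [ih, hm] at h
    rw [hm']
    have h2 : ∏ r, Nat.descFactorial 4 (s (insert c S) r) =
        (∏ r, Nat.descFactorial 4 (s S r)) * (4 - s S c.1) := by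
      rw [← Finset.mul_prod_erase univ _ (mem_univ c.1),
        ← Finset.mul_prod_erase (univ : Finset (Fin n)) (fun r => Nat.descFactorial 4 (s S r)) (mem_univ c.1)]
      rw [s_insert S c hc c.1, if_pos rfl, Nat.descFactorial_succ]
      rw [Finset.prod_congr rfl (g := fun r => Nat.descFactorial 4 (s S r))]
      · ring
      · intro r hr
        rw [s_insert S c hc r, if_neg (Finset.ne_of_mem_erase hr), add_zero]
    rw [h2]
    rw [Nat.factorial_succ] at h
    apply Nat.eq_of_mul_eq_mul_right (Nat.succ_pos m)
    rw [Nat.succ_eq_add_one, h]; ring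

lemma R_eq_sum (n : ℕ) : (R n : ℤ) = ∑ S : Finset (Fin n × Fin 4), (-1 : ℤ) ^ S.card * (N S).card := by
  have := Finset.inclusion_exclusion_card_inf_compl (univ : Finset (Fin n × Fin 4))
    (fun c => univ.filter fun σ : Equiv.Perm (Fin n × Fin 4) => (σ c).1 = c.1)
  rw [Finset.powerset_univ] at this
  convert this using 2
  · unfold R
    congr 2
    ext σ
    simp [Finset.mem_inf]
  · congr 2
    congr 1
    ext σ
    simp [Finset.mem_inf, N]

/-- Slicing a set of cards by rank. -/
def slice (n : ℕ) : Finset (Fin n × Fin 4) ≃ (Fin n → Finset (Fin 4)) where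
  toFun S r := univ.filter fun k => (r, k) ∈ S
  invFun x := univ.filter fun c => c.2 ∈ x c.1
  left_inv S := by ext; simp
  right_inv x := by ext; simp

lemma slice_card {n : ℕ} (S : Finset (Fin n × Fin 4)) (r) : (slice n S r).card = s S r := by
  unfold s slice
  apply Finset.card_bij (fun k _ => (r, k))
  · simp
  · simp
  · rintro ⟨a, b⟩ h; simp at h; exact ⟨b, by simpa [h.2] using h.1, by simp [h.2]⟩

lemma Lg_eq : Lg = ∑ T : Finset (Fin 4), C ((-1 : ℝ) ^ T.card * Nat.descFactorial 4 T.card) *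
    X ^ (4 - T.card) := by
  rw [← Finset.powerset_univ, Finset.sum_powerset_apply_card
    (fun k => C ((-1 : ℝ) ^ k * Nat.descFactorial 4 k) * X ^ (4 - k))]
  simp [Finset.sum_range_succ, Nat.choose, Nat.descFactorial, Lg, map_ofNat C, nsmul_eq_mul]
  ring

lemma R_eq (n : ℕ) : (R n : ℝ) = e 0 n := by
  have h := R_eq_sum n
  have h : (R n : ℝ) = ∑ S : Finset (Fin n × Fin 4), (-1 : ℝ) ^ S.card * (N S).card := by
    exact_mod_cast congrArg (Int.cast : ℤ → ℝ) h
  rw [h]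
  unfold e
  have hL : Lg ^ n = ∏ _r : Fin n, ∑ T : Finset (Fin 4),
      C ((-1 : ℝ) ^ T.card * Nat.descFactorial 4 T.card) * X ^ (4 - T.card) := by
    rw [Finset.prod_const, ← Lg_eq]; simp
  rw [pow_zero, one_mul, hL, Finset.prod_univ_sum, map_sum, Fintype.piFinset_univ]
  apply Fintype.sum_equiv (slice n)
  intro S
  have hs : ∑ r, s S r = S.card := by
    unfold s
    exact (Finset.card_eq_sum_card_fiberwise (f := fun c : Fin n × Fin 4 => c.1) (t := univ) (by simp)).symm
  have hs4 : ∀ r, s S r ≤ 4 := by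
    intro r
    rw [← slice_card]
    simpa using Finset.card_le_univ (slice n S r)
  simp_rw [slice_card]
  rw [Finset.prod_mul_distrib, Finset.prod_pow_eq_pow_sum, ← map_prod, E_CX, N_card,
    Finset.prod_mul_distrib, Finset.prod_pow_eq_pow_sum, hs]
  have : ∑ r, (4 - s S r) = 4 * n - S.card := by
    rw [Finset.sum_tsub_distrib _ (fun r _ => hs4 r), hs]; simp [mul_comm]
  rw [this]
  push_cast
  ring

lemma Lg_deriv : derivative Lg = C (-96) + C 144 * X + C (-48) * X ^ 2 + C 4 * X ^ 3 := by
  simp [Lg, map_ofNat C]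
  ring

lemma e_C (j n : ℕ) : e j (n + 1) = e (j + 4) n - 16 * e (j + 3) n + 72 * e (j + 2) n
    - 96 * e (j + 1) n + 24 * e j n := by
  unfold e
  have : X ^ j * Lg ^ (n + 1) = X ^ (j + 4) * Lg ^ n + C (-16) * (X ^ (j + 3) * Lg ^ n)
    + C 72 * (X ^ (j + 2) * Lg ^ n) + C (-96) * (X ^ (j + 1) * Lg ^ n) + C 24 * (X ^ j * Lg ^ n) := by
    rw [pow_succ Lg]
    generalize Lg ^ n = M
    unfold Lg
    ring
  rw [this]
  simp only [map_add, E_C_mul]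
  ring

lemma e_A (n : ℕ) : e 0 (n + 1) = 24 ^ (n + 1) + (n + 1) * (4 * e 3 n - 48 * e 2 n
    + 144 * e 1 n - 96 * e 0 n) := by
  unfold e
  rw [E_deriv]
  have h0 : (X ^ 0 * Lg ^ (n + 1)).coeff 0 = 24 ^ (n + 1) := by
    rw [coeff_zero_eq_eval_zero]; simp [Lg]
  have : derivative (X ^ 0 * Lg ^ (n + 1)) = C ((n : ℝ) + 1) * (C 4 * (X ^ 3 * Lg ^ n)
    + C (-48) * (X ^ 2 * Lg ^ n) + C 144 * (X ^ 1 * Lg ^ n) + C (-96) * (X ^ 0 * Lg ^ n)) := by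
    rw [pow_zero, one_mul, derivative_pow_succ, Lg_deriv]
    generalize Lg ^ n = M
    simp only [map_add, map_natCast, map_one]
    ring
  rw [this, h0, E_C_mul]
  simp only [map_add, E_C_mul]
  ring

lemma e_B (j n : ℕ) : e (j + 1) (n + 1) = (4 * (n + 1) + j + 1) * e j (n + 1) +
    (n + 1) * (16 * e (j + 3) n - 144 * e (j + 2) n + 288 * e (j + 1) n - 96 * e j n) := by
  conv_lhs => unfold e
  rw [E_deriv]
  have h0 : (X ^ (j + 1) * Lg ^ (n + 1)).coeff 0 = 0 := by
    rw [coeff_zero_eq_eval_zero]; simp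
  have : derivative (X ^ (j + 1) * Lg ^ (n + 1)) = C (4 * ((n : ℝ) + 1) + j + 1) * (X ^ j * Lg ^ (n + 1))
    + C ((n : ℝ) + 1) * (C 16 * (X ^ (j + 3) * Lg ^ n)
    + C (-144) * (X ^ (j + 2) * Lg ^ n) + C 288 * (X ^ (j + 1) * Lg ^ n) + C (-96) * (X ^ j * Lg ^ n)) := by
    rw [derivative_mul, derivative_X_pow_succ, derivative_pow_succ, Lg_deriv]
    rw [pow_succ Lg]
    generalize Lg ^ n = M
    unfold Lg
    simp only [map_add, map_mul, map_natCast, map_one, map_neg, map_ofNat]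
    ring
  rw [this, h0, map_add, E_C_mul, E_C_mul, map_add, map_add, map_add, E_C_mul, E_C_mul, E_C_mul,
    E_C_mul]
  unfold e
  ring

/-- The block rook polynomial. -/
noncomputable def Q : ℕ[X] := 1 + 16 * X + 72 * X ^ 2 + 96 * X ^ 3 + 24 * X ^ 4

lemma coeff_le_mul {A B A' B' : ℕ[X]} (h : ∀ k, A.coeff k ≤ B.coeff k)
    (h' : ∀ k, A'.coeff k ≤ B'.coeff k) (k : ℕ) : (A * A').coeff k ≤ (B * B').coeff k := by
  rw [coeff_mul, coeff_mul]
  exact Finset.sum_le_sum fun x _ => Nat.mul_le_mul (h _) (h' _)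

lemma coeff_le_pow {A B : ℕ[X]} (h : ∀ k, A.coeff k ≤ B.coeff k) (n : ℕ) :
    ∀ k, (A ^ n).coeff k ≤ (B ^ n).coeff k := by
  induction n with
  | zero => simp
  | succ n ih => intro k; rw [pow_succ, pow_succ]; exact coeff_le_mul ih h k

lemma coeff_lin (a m k : ℕ) : ((1 + C a * X : ℕ[X]) ^ m).coeff k = m.choose k * a ^ k := by
  have : (1 + C a * X : ℕ[X]) ^ m = ((1 + X) ^ m).comp (C a * X) := by simp
  rw [this, comp_C_mul_X_coeff, coeff_one_add_X_pow]; simp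

lemma Q_ub (n k : ℕ) : (Q ^ n).coeff k ≤ (4 * n).choose k * 4 ^ k := by
  rw [← coeff_lin, pow_mul]
  apply coeff_le_pow
  intro k
  have h1 : (1 + C 4 * X : ℕ[X]) ^ 4 = Q + (24 * X ^ 2 + 160 * X ^ 3 + 232 * X ^ 4) := by
    rw [Q]; simp only [map_ofNat]; ring
  rw [h1, coeff_add]; omega

lemma Q_lb (n k : ℕ) : n.choose k * 16 ^ k ≤ (Q ^ n).coeff k := by
  rw [← coeff_lin]
  apply coeff_le_pow
  intro k
  have h1 : Q = (1 + C 16 * X : ℕ[X]) + (72 * X ^ 2 + 96 * X ^ 3 + 24 * X ^ 4) := by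
    rw [Q]; simp only [map_ofNat]; ring
  rw [h1, coeff_add (1 + C 16 * X)]; omega

/-- signed version -/
noncomputable def P : ℝ[X] := (Q.map (Nat.castRingHom ℝ)).comp (C (-1) * X)

lemma P_eq : P = C 1 + C (-16) * X ^ 1 + C 72 * X ^ 2 + C (-96) * X ^ 3 + C 24 * X ^ 4 := by
  simp [P, Q, map_ofNat C]; ring

lemma P_deg : P.natDegree ≤ 4 := by
  rw [P_eq]; compute_degree

lemma Lg_reflect : Lg = reflect 4 P := by
  rw [P_eq]
  simp only [reflect_add, reflect_C_mul_X_pow, reflect_C]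
  simp [revAt_le, Lg, map_ofNat C]
  ring

lemma Lg_pow (n : ℕ) : Lg ^ n = reflect (4 * n) (P ^ n) := by
  induction n with
  | zero => simp
  | succ n ih =>
    rw [pow_succ, ih, pow_succ, Nat.mul_succ, reflect_mul, ← Lg_reflect]
    · exact (natDegree_pow_le).trans (by rw [mul_comm]; exact Nat.mul_le_mul_right _ P_deg)
    · exact P_deg

lemma P_coeff (n k : ℕ) : (P ^ n).coeff k = (-1) ^ k * ((Q ^ n).coeff k : ℝ) := by
  have : P ^ n = ((Q ^ n).map (Nat.castRingHom ℝ)).comp (C (-1) * X) := by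
    rw [P, Polynomial.map_pow, pow_comp]
  rw [this, comp_C_mul_X_coeff, coeff_map, mul_comm]; simp

lemma e_eq (j n : ℕ) : e j n = ∑ k ∈ range (4 * n + 1),
    (-1) ^ k * ((Q ^ n).coeff k : ℝ) * (4 * n - k + j).factorial := by
  have hd : (P ^ n).natDegree < 4 * n + 1 := Nat.lt_succ_of_le
    ((natDegree_pow_le).trans (by rw [mul_comm]; exact Nat.mul_le_mul_right _ P_deg))
  have h : X ^ j * Lg ^ n = ∑ k ∈ range (4 * n + 1), C ((P ^ n).coeff k) * X ^ (4 * n - k + j) := by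
    rw [Lg_pow]
    have h2 : reflect (4 * n) (P ^ n) = ∑ k ∈ range (4 * n + 1), C ((P ^ n).coeff k) * X ^ (4 * n - k) := by
      ext i
      rw [coeff_reflect, finsetSum_coeff]
      simp only [coeff_C_mul_X_pow]
      by_cases hi : i ≤ 4 * n
      · rw [revAt_le hi, Finset.sum_eq_single (4 * n - i)]
        · rw [if_pos (by omega)]
        · intro b hb hne
          rw [if_neg]
          simp at hb; omega
        · intro h; exact absurd (mem_range.mpr (by omega)) h
      · rw [revAt_eq_self_of_lt (by omega), coeff_eq_zero_of_natDegree_lt (by omega)]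
        symm
        apply Finset.sum_eq_zero
        intro k _
        rw [if_neg (by omega)]
    rw [h2, Finset.mul_sum]
    refine Finset.sum_congr rfl fun k _ => ?_
    rw [pow_add]; ring
  rw [e, h, map_sum]
  refine Finset.sum_congr rfl fun k _ => ?_
  rw [E_CX, P_coeff]

lemma fact_mono (a b j : ℕ) (h : a ≤ b) : b.factorial * (a + j).factorial ≤
    (b + j).factorial * a.factorial := by
  induction j with
  | zero => simp
  | succ j ih =>
    rw [← add_assoc, ← add_assoc, Nat.factorial_succ, Nat.factorial_succ]
    calc _ = (a + j + 1) * (b.factorial * (a + j).factorial) := by ring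
      _ ≤ (b + j + 1) * ((b + j).factorial * a.factorial) := Nat.mul_le_mul (by omega) ih
      _ = _ := by ring

/-- term -/
noncomputable def q (j n k : ℕ) : ℝ :=
  ((Q ^ n).coeff k : ℝ) * (4 * n - k + j).factorial / (4 * n + j).factorial

lemma Q_zero (n k : ℕ) (h : 4 * n < k) : (Q ^ n).coeff k = 0 := by
  have := Q_ub n k
  rw [Nat.choose_eq_zero_of_lt h] at this
  omega

lemma q_nonneg (j n k : ℕ) : 0 ≤ q j n k := by unfold q; positivity

lemma q_le (j n k : ℕ) : q j n k ≤ 4 ^ k / k.factorial := by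
  unfold q
  by_cases hk : k ≤ 4 * n
  · rw [div_le_div_iff₀ (by positivity) (by positivity)]
    have h1 := Q_ub n k
    have h2 := fact_mono (4 * n - k) (4 * n) j (by omega)
    have h3 := Nat.choose_mul_factorial_mul_factorial hk
    have : (Q ^ n).coeff k * (4 * n - k + j).factorial * k.factorial ≤ 4 ^ k * (4 * n + j).factorial := by
      apply Nat.le_of_mul_le_mul_right _ (Nat.factorial_pos (4 * n - k))
      calc _ = (Q ^ n).coeff k * ((4 * n - k + j).factorial * k.factorial * (4 * n - k).factorial) := by ring
        _ ≤ ((4 * n).choose k * 4 ^ k) * ((4 * n - k + j).factorial * k.factorial * (4 * n - k).factorial) :=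
            Nat.mul_le_mul_right _ h1
        _ = 4 ^ k * (((4 * n).choose k * k.factorial * (4 * n - k).factorial) * (4 * n - k + j).factorial) := by ring
        _ ≤ 4 ^ k * ((4 * n + j).factorial * (4 * n - k).factorial) := by
            rw [h3]; exact Nat.mul_le_mul_left _ h2
        _ = _ := by ring
    exact_mod_cast this
  · rw [Q_zero n k (by omega)]; simp; positivity

lemma q_ge (j n k : ℕ) (hk : k ≤ n) :
    16 ^ k / k.factorial * ∏ i ∈ range k, (((n : ℝ) - i) / (4 * n + j - i)) ≤ q j n k := by
  unfold q
  rw [le_div_iff₀ (by positivity)]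
  have h1 := Q_lb n k
  have h2 : (4 * n + j - k).factorial * (4 * n + j).descFactorial k = (4 * n + j).factorial :=
    Nat.factorial_mul_descFactorial (by omega)
  have h3 : (n.descFactorial k : ℝ) = ∏ i ∈ range k, ((n : ℝ) - i) := by
    rw [Nat.descFactorial_eq_prod_range]; push_cast
    refine Finset.prod_congr rfl fun i hi => ?_
    simp at hi
    rw [Nat.cast_sub (by omega)]
  have h4 : ((4 * n + j).descFactorial k : ℝ) = ∏ i ∈ range k, (4 * (n : ℝ) + j - i) := by
    rw [Nat.descFactorial_eq_prod_range]; push_cast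
    refine Finset.prod_congr rfl fun i hi => ?_
    simp at hi
    rw [Nat.cast_sub (by omega)]; push_cast; ring
  rw [Finset.prod_div_distrib, ← h3, ← h4, ← h2, show 4 * n + j - k = 4 * n - k + j by omega]
  have h5 : ((4 * n + j).descFactorial k : ℝ) ≠ 0 := by
    rw [Nat.cast_ne_zero, Ne, Nat.descFactorial_eq_zero_iff_lt]; omega
  have h6 : (n.descFactorial k : ℝ) = k.factorial * n.choose k := by
    exact_mod_cast Nat.descFactorial_eq_factorial_mul_choose n k
  rw [h6]
  push_cast
  have h7 : (k.factorial : ℝ) ≠ 0 := by positivity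
  calc _ = ((n.choose k * 16 ^ k : ℕ) : ℝ) * (4 * n - k + j).factorial := by
        push_cast; field_simp
    _ ≤ _ := by gcongr

lemma q_lim (j k : ℕ) : Filter.Tendsto (fun n => q j n k) Filter.atTop (nhds (4 ^ k / k.factorial)) := by
  have hterm : ∀ i : ℕ, Filter.Tendsto (fun n : ℕ => ((n : ℝ) - i) / (4 * n + j - i)) Filter.atTop
      (nhds (1 / 4)) := by
    intro i
    have hx : Filter.Tendsto (fun n : ℕ => ((n : ℝ))⁻¹) Filter.atTop (nhds 0) :=
      tendsto_inv_atTop_nhds_zero_nat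
    have h1 : Filter.Tendsto (fun n : ℕ => (1 - i * (n : ℝ)⁻¹) / (4 + (j - i) * (n : ℝ)⁻¹)) Filter.atTop
        (nhds ((1 - i * 0) / (4 + (j - i) * 0))) := by
      apply Filter.Tendsto.div
      · exact tendsto_const_nhds.sub (hx.const_mul _)
      · exact tendsto_const_nhds.add (hx.const_mul _)
      · norm_num
    have h2 : ((1 - (i : ℝ) * 0) / (4 + (j - i) * 0)) = 1 / 4 := by norm_num
    rw [h2] at h1
    refine h1.congr' ?_
    filter_upwards [Filter.eventually_gt_atTop i] with n hn
    have hn0 : (0 : ℝ) < n := by exact_mod_cast (by omega : 0 < n)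
    have hni : (i : ℝ) < n := by exact_mod_cast hn
    have hj : (0 : ℝ) ≤ j := by positivity
    have hd : 0 < 4 * (n : ℝ) + j - i := by linarith
    have e1 : (1 - i * (n : ℝ)⁻¹) = ((n : ℝ) - i) * (n : ℝ)⁻¹ := by field_simp
    have e2 : (4 + (j - i) * (n : ℝ)⁻¹) = (4 * n + j - i) * (n : ℝ)⁻¹ := by field_simp; ring
    rw [e1, e2, mul_div_mul_right _ _ (by positivity)]
  have hprod := tendsto_finsetProd (range k) (fun i _ => hterm i)
  have hlow := hprod.const_mul ((16 : ℝ) ^ k / k.factorial)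
  have hval : (16 : ℝ) ^ k / k.factorial * ∏ i ∈ range k, (1 / 4 : ℝ) = 4 ^ k / k.factorial := by
    rw [Finset.prod_const, card_range, div_mul_eq_mul_div, ← mul_pow]; norm_num
  rw [hval] at hlow
  refine tendsto_of_tendsto_of_tendsto_of_le_of_le' hlow tendsto_const_nhds ?_ ?_
  · filter_upwards [Filter.eventually_ge_atTop k] with n hn using q_ge j n k hn
  · exact Filter.Eventually.of_forall fun n => q_le j n k

/-- normalised moments -/
noncomputable def v (j n : ℕ) : ℝ := e j n / (4 * n + j).factorial

lemma v_eq (j n : ℕ) : v j n = ∑' k, (-1) ^ k * q j n k := by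
  rw [tsum_eq_sum (s := range (4 * n + 1)), v, e_eq, Finset.sum_div]
  · refine Finset.sum_congr rfl fun k _ => ?_
    unfold q; ring
  · intro k hk
    simp at hk
    simp [q, Q_zero n k (by omega)]

lemma v_lim (j : ℕ) : Filter.Tendsto (v j) Filter.atTop (nhds (Real.exp (-4))) := by
  have hs : Summable fun k : ℕ => (4 : ℝ) ^ k / k.factorial := Real.summable_pow_div_factorial 4
  have h := tendsto_tsum_of_dominated_convergence (f := fun n k => (-1 : ℝ) ^ k * q j n k)
    (g := fun k => (-1 : ℝ) ^ k * (4 ^ k / k.factorial)) (𝓕 := Filter.atTop) hs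
    (fun k => (q_lim j k).const_mul _)
    (Filter.Eventually.of_forall fun n k => by
      rw [norm_mul, norm_pow, norm_neg, norm_one, one_pow, one_mul, Real.norm_of_nonneg (q_nonneg _ _ _)]
      exact q_le j n k)
  have h2 : ∑' k : ℕ, (-1 : ℝ) ^ k * (4 ^ k / k.factorial) = Real.exp (-4) := by
    rw [Real.exp_eq_exp_ℝ, ← (NormedSpace.expSeries_div_hasSum_exp (-4 : ℝ)).tsum_eq]
    congr 1; ext k
    rw [← mul_div_assoc, ← mul_pow]; norm_num
  rw [h2] at h
  exact h.congr fun n => (v_eq j n).symm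

lemma digit (f : ℕ[X]) (B : ℕ) (k : ℕ) (h : ∀ i, f.coeff i < B) :
    f.coeff k = f.eval B / B ^ k % B := by
  have hB : 0 < B := lt_of_le_of_lt (Nat.zero_le _) (h 0)
  induction k generalizing f with
  | zero =>
    conv_rhs => rw [← divX_mul_X_add f]
    simp [Nat.mod_eq_of_lt (h 0)]
  | succ k ih =>
    have h1 := ih (divX f) (fun i => by rw [coeff_divX]; exact h _)
    rw [coeff_divX] at h1
    rw [h1, pow_succ', ← Nat.div_div_eq_div_mul]
    congr 2
    conv_rhs => rw [← divX_mul_X_add f]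
    rw [eval_add, eval_mul, eval_X, eval_C, mul_comm, Nat.mul_add_div hB,
      Nat.div_eq_of_lt (h 0), add_zero]

lemma coeff_le_eval (f : ℕ[X]) (k : ℕ) : f.coeff k ≤ f.eval 1 := by
  rw [eval_eq_sum_range]
  by_cases hk : k ≤ f.natDegree
  · refine le_trans ?_ (Finset.single_le_sum (f := fun i => f.coeff i * 1 ^ i)
      (fun i _ => Nat.zero_le _) (mem_range.mpr (Nat.lt_succ_of_le hk)))
    simp
  · rw [coeff_eq_zero_of_natDegree_lt (by omega)]; simp

/-- the Kronecker-packed rook polynomial -/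
def pk (B n : ℕ) : ℕ := (1 + 16 * B + 72 * B ^ 2 + 96 * B ^ 3 + 24 * B ^ 4) ^ n

lemma Q_pk (n k : ℕ) (hn : n ≠ 0) : (Q ^ n).coeff k = pk (256 ^ n) n / (256 ^ n) ^ k % 256 ^ n := by
  rw [digit (Q ^ n) (256 ^ n) k]
  · simp [Q, pk]
  · intro i
    refine lt_of_le_of_lt (coeff_le_eval _ _) ?_
    have : (Q ^ n).eval 1 = 209 ^ n := by simp [Q]
    rw [this]
    exact Nat.pow_lt_pow_left (by norm_num) hn

/-- partial alternating sums -/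
def acc (M B N : ℕ) : ℕ → ℤ
  | 0 => 0
  | k + 1 => acc M B N k + if k % 2 = 0 then ((M / B ^ k % B * (N - k).factorial : ℕ) : ℤ)
      else - ((M / B ^ k % B * (N - k).factorial : ℕ) : ℤ)

lemma acc_eq (M B N m : ℕ) : (acc M B N m : ℝ) =
    ∑ k ∈ range m, (-1) ^ k * ((M / B ^ k % B : ℕ) : ℝ) * (N - k).factorial := by
  induction m with
  | zero => simp [acc]
  | succ m ih =>
    rw [acc, Finset.sum_range_succ, Int.cast_add, ih]
    congr 1
    generalize M / B ^ m % B = d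
    split_ifs with h
    · rw [(Nat.even_iff.mpr h).neg_one_pow]; push_cast; ring
    · rw [(Nat.odd_iff.mpr (by omega)).neg_one_pow]; push_cast; ring

lemma R_acc (n : ℕ) (hn : n ≠ 0) : (R n : ℝ) = acc (pk (256 ^ n) n) (256 ^ n) (4 * n) (4 * n + 1) := by
  rw [R_eq, e_eq, acc_eq]
  refine Finset.sum_congr rfl fun k _ => ?_
  rw [Q_pk n k hn, add_zero]

lemma p_bounds (n a b : ℕ) (hn : n ≠ 0)
    (h1 : (a * (4 * n).factorial : ℕ) < acc (pk (256 ^ n) n) (256 ^ n) (4 * n) (4 * n + 1) * 10000)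
    (h2 : acc (pk (256 ^ n) n) (256 ^ n) (4 * n) (4 * n + 1) * 10000 < (b * (4 * n).factorial : ℕ)) :
    (a : ℝ) / 10000 < p n ∧ p n < (b : ℝ) / 10000 := by
  unfold p
  have h1' := (Int.cast_lt (R := ℝ)).mpr h1
  have h2' := (Int.cast_lt (R := ℝ)).mpr h2
  rw [Int.cast_mul, ← R_acc n hn] at h1' h2'
  push_cast at h1' h2'
  rw [div_lt_div_iff₀ (by positivity) (by positivity), div_lt_div_iff₀ (by positivity) (by positivity)]
  exact ⟨h1', h2'⟩

lemma p13 : ((160 : ℕ) : ℝ) / 10000 < p 13 ∧ p 13 < ((165 : ℕ) : ℝ) / 10000 :=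
  p_bounds 13 160 165 (by norm_num) (by decide +kernel) (by decide +kernel)
lemma p20 : ((166 : ℕ) : ℝ) / 10000 < p 20 ∧ p 20 < ((172 : ℕ) : ℝ) / 10000 :=
  p_bounds 20 166 172 (by norm_num) (by decide +kernel) (by decide +kernel)
lemma p50 : ((175 : ℕ) : ℝ) / 10000 < p 50 ∧ p 50 < ((178 : ℕ) : ℝ) / 10000 :=
  p_bounds 50 175 178 (by norm_num) (by decide +kernel) (by decide +kernel)

lemma exp_bd : (178 : ℝ) / 10000 < Real.exp (-4) := by
  have h2 : Real.exp (-4) = (Real.exp 1 ^ 4)⁻¹ := by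
    rw [← Real.exp_nat_mul, ← Real.exp_neg]; norm_num
  rw [h2, lt_inv_comm₀ (by norm_num) (by positivity)]
  have := Real.exp_one_lt_d9
  calc Real.exp 1 ^ 4 < 2.7182818286 ^ 4 := by gcongr
    _ < _ := by norm_num

lemma v_A (n : ℕ) : v 0 (n + 1) = 24 ^ (n + 1) / (4 * (n + 1)).factorial + v 3 n
    - 12 / (4 * n + 3) * v 2 n + 36 / ((4 * n + 3) * (4 * n + 2)) * v 1 n
    - 24 / ((4 * n + 3) * (4 * n + 2) * (4 * n + 1)) * v 0 n := by
  unfold v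
  rw [e_A]
  have hf : (0 : ℝ) < (4 * n).factorial := by positivity
  simp only [show 4 * (n + 1) = 4 * n + 3 + 1 by ring, Nat.factorial_succ, add_zero]
  push_cast
  generalize ((4 * n).factorial : ℝ) = F at *
  field_simp
  ring

lemma v_B (j n : ℕ) : v (j + 1) (n + 1) = v j (n + 1) +
    16 * (n + 1) / ((4 * n + j + 5) * (4 * n + j + 4)) * v (j + 3) n
    - 144 * (n + 1) / ((4 * n + j + 5) * (4 * n + j + 4) * (4 * n + j + 3)) * v (j + 2) n
    + 288 * (n + 1) / ((4 * n + j + 5) * (4 * n + j + 4) * (4 * n + j + 3) * (4 * n + j + 2)) * v (j + 1) n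
    - 96 * (n + 1) / ((4 * n + j + 5) * (4 * n + j + 4) * (4 * n + j + 3) * (4 * n + j + 2)
      * (4 * n + j + 1)) * v j n := by
  unfold v
  rw [e_B]
  have hf : (0 : ℝ) < (4 * n + j).factorial := by positivity
  simp only [show 4 * (n + 1) + j = 4 * n + j + 4 by ring, ← add_assoc, Nat.factorial_succ]
  push_cast
  generalize ((4 * n + j).factorial : ℝ) = F at *
  field_simp
  ring

lemma v_C (j n : ℕ) : v j (n + 1) = v (j + 4) n - 16 / (4 * n + j + 4) * v (j + 3) n
    + 72 / ((4 * n + j + 4) * (4 * n + j + 3)) * v (j + 2) n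
    - 96 / ((4 * n + j + 4) * (4 * n + j + 3) * (4 * n + j + 2)) * v (j + 1) n
    + 24 / ((4 * n + j + 4) * (4 * n + j + 3) * (4 * n + j + 2) * (4 * n + j + 1)) * v j n := by
  unfold v
  rw [e_C]
  have hf : (0 : ℝ) < (4 * n + j).factorial := by positivity
  simp only [show 4 * (n + 1) + j = 4 * n + j + 4 by ring, ← add_assoc, Nat.factorial_succ]
  push_cast
  generalize ((4 * n + j).factorial : ℝ) = F at *
  field_simp
  ring

open Filter Topology

/-- reciprocal -/
noncomputable def h (b : ℝ) (n : ℕ) : ℝ := (4 * (n : ℝ) + b)⁻¹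

/-- deck size -/
def D (n : ℕ) : ℝ := 4 * (n : ℝ) + 4

lemma h_lim (b : ℝ) : Tendsto (h b) atTop (𝓝 0) := by
  unfold h
  apply Tendsto.inv_tendsto_atTop
  apply tendsto_atTop_add_const_right
  exact tendsto_natCast_atTop_atTop.const_mul_atTop (by norm_num)

lemma g_lim (b : ℝ) (hb : 0 < b) : Tendsto (fun n => D n * h b n) atTop (𝓝 1) := by
  have h1 : Tendsto (fun n => 1 + (4 - b) * h b n) atTop (𝓝 (1 + (4 - b) * 0)) :=
    tendsto_const_nhds.add ((h_lim b).const_mul _)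
  rw [mul_zero, add_zero] at h1
  refine h1.congr fun n => ?_
  unfold D h
  have : (0 : ℝ) < 4 * n + b := by positivity
  field_simp
  ring

lemma v_B' (j n : ℕ) : v (j + 1) (n + 1) = v j (n + 1) +
    4 * D n * h (j + 5) n * h (j + 4) n * v (j + 3) n
    - 36 * D n * h (j + 5) n * h (j + 4) n * h (j + 3) n * v (j + 2) n
    + 72 * D n * h (j + 5) n * h (j + 4) n * h (j + 3) n * h (j + 2) n * v (j + 1) n
    - 24 * D n * h (j + 5) n * h (j + 4) n * h (j + 3) n * h (j + 2) n * h (j + 1) n * v j n := by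
  rw [v_B]
  unfold D h
  simp only [div_eq_mul_inv, mul_inv, ← add_assoc]
  ring

lemma v_C' (j n : ℕ) : v j (n + 1) = v (j + 4) n - 16 * h (j + 4) n * v (j + 3) n
    + 72 * h (j + 4) n * h (j + 3) n * v (j + 2) n
    - 96 * h (j + 4) n * h (j + 3) n * h (j + 2) n * v (j + 1) n
    + 24 * h (j + 4) n * h (j + 3) n * h (j + 2) n * h (j + 1) n * v j n := by
  rw [v_C]
  unfold h
  simp only [div_eq_mul_inv, mul_inv, ← add_assoc]
  ring

lemma v_A' (n : ℕ) : v 0 (n + 2) = 24 ^ (n + 2) / (4 * (n + 2)).factorial + v 3 (n + 1)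
    - 12 * h 7 n * v 2 (n + 1) + 36 * h 7 n * h 6 n * v 1 (n + 1)
    - 24 * h 7 n * h 6 n * h 5 n * v 0 (n + 1) := by
  rw [v_A]
  unfold h
  simp only [div_eq_mul_inv, mul_inv]
  push_cast
  rw [show (4 * ((n : ℝ) + 1) + 3) = 4 * n + 7 by ring, show (4 * ((n : ℝ) + 1) + 2) = 4 * n + 6 by ring,
    show (4 * ((n : ℝ) + 1) + 1) = 4 * n + 5 by ring, show n + 1 + 1 = n + 2 by rfl]
  ring

lemma d_lim1 (j : ℕ) : Tendsto (fun n => D n * (v (j + 1) (n + 1) - v j (n + 1))) atTop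
    (𝓝 (4 * Real.exp (-4))) := by
  have g5 := g_lim (j + 5) (by positivity)
  have g4 := g_lim (j + 4) (by positivity)
  have h3 := h_lim (j + 3)
  have h2 := h_lim (j + 2)
  have h1 := h_lim (j + 1)
  have g54 := g5.mul g4
  have key := ((((g54.mul (v_lim (j + 3))).const_mul 4).sub
    (((g54.mul h3).mul (v_lim (j + 2))).const_mul 36)).add
    ((((g54.mul h3).mul h2).mul (v_lim (j + 1))).const_mul 72)).sub
    (((((g54.mul h3).mul h2).mul h1).mul (v_lim j)).const_mul 24)
  convert key.congr fun n => ?_ using 2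
  · ring
  · rw [v_B' j n]; ring

lemma d_lim (j : ℕ) : Tendsto (fun n => D n * (v (j + 1) n - v j n)) atTop
    (𝓝 (4 * Real.exp (-4))) := by
  rw [← tendsto_add_atTop_iff_nat 1]
  have := (d_lim1 j).add (((v_lim (j + 1)).sub (v_lim j)).comp (tendsto_add_atTop_nat 1) |>.const_mul 4)
  convert this.congr fun n => ?_ using 2
  · ring
  · simp only [D, Function.comp_apply]; push_cast; ring

lemma main_lim : Tendsto (fun n => D n ^ 2 * (v 0 (n + 2) - v 0 (n + 1)
    - 24 ^ (n + 2) / (4 * (n + 2)).factorial)) atTop (𝓝 (24 * Real.exp (-4))) := by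
  have g3 := g_lim 3 (by norm_num)
  have g4 := g_lim 4 (by norm_num)
  have g5 := g_lim 5 (by norm_num)
  have g6 := g_lim 6 (by norm_num)
  have g7 := g_lim 7 (by norm_num)
  have h1 := h_lim 1
  have h2 := h_lim 2
  have h3 := h_lim 3
  have h4 := h_lim 4
  have h5 := h_lim 5
  have d4 := d_lim 3
  have d5 := d_lim 4
  have d6 := d_lim 5
  -- the second order difference
  have dv : Tendsto (fun n => D n * (v 2 (n + 1) - v 3 n)) atTop (𝓝 (-4 * Real.exp (-4))) := by
    have key := (((((d4.add d5).add d6).sub ((g6.mul (v_lim 5)).const_mul 16)).add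
      (((g6.mul h5).mul (v_lim 4)).const_mul 72)).sub
      ((((g6.mul h5).mul h4).mul (v_lim 3)).const_mul 96)).add
      (((((g6.mul h5).mul h4).mul h3).mul (v_lim 2)).const_mul 24)
    convert key.congr fun n => ?_ using 2
    · ring
    · have := v_C' 2 n
      norm_num at this
      rw [this]; ring
  have t1 := (((g6.mul g5).mul d4).const_mul 4).add (((g7.mul g6).mul (d4.add d5)).const_mul 4)
  have t2 := t1.sub ((g7.mul dv).const_mul 12)
  have a0 := (g5.mul g4).mul g3
  have a1 := (g6.mul g5).mul g4
  have a2 := (g7.mul g6).mul g5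
  have t3 := (((a0.mul (v_lim 2)).add (a1.mul (v_lim 3))).add (a2.mul (v_lim 4))).const_mul 36
  have t4 := ((((a0.mul h2).mul (v_lim 1)).add ((a1.mul h3).mul (v_lim 2))).add
    ((a2.mul h4).mul (v_lim 3))).const_mul 72
  have t5 := (((((a0.mul h2).mul h1).mul (v_lim 0)).add (((a1.mul h3).mul h2).mul (v_lim 1))).add
    (((a2.mul h4).mul h3).mul (v_lim 2))).const_mul 24
  have s1 := (v_lim 1).comp (tendsto_add_atTop_nat 1)
  have s0 := (v_lim 0).comp (tendsto_add_atTop_nat 1)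
  have t6 := ((g7.mul g6).mul s1).const_mul 36
  have t7 := (((g7.mul g6).mul h5).mul s0).const_mul 24
  have key := ((((t2.sub t3).add t4).sub t5).add t6).sub t7
  convert key.congr fun n => ?_ using 2
  · ring
  · have b0 := v_B' 0 n
    have b1 := v_B' 1 n
    have b2 := v_B' 2 n
    norm_num at b0 b1 b2
    have hz : D n ^ 2 * (4 * D n * h 5 n * h 4 n + 4 * D n * h 6 n * h 5 n + 4 * D n * h 7 n * h 6 n
      - 12 * h 7 n) = 0 := by
      unfold D h
      field_simp
      ring
    rw [v_A' n]
    simp only [Function.comp_apply]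
    linear_combination (-v 3 n) * hz - D n ^ 2 * (b0 + b1 + b2)

lemma p_eq (n : ℕ) : p n = v 0 n := by
  rw [p, v, R_eq, add_zero]

lemma p_mono : ∃ N : ℕ, ∀ a b : ℕ, N ≤ a → a ≤ b → p a ≤ p b := by
  have hpos : (0 : ℝ) < 24 * Real.exp (-4) := by positivity
  obtain ⟨N, hN⟩ := eventually_atTop.mp (main_lim.eventually (lt_mem_nhds hpos))
  refine ⟨N + 1, fun a b ha hab => ?_⟩
  induction b, hab using Nat.le_induction with
  | base => exact le_rfl
  | succ b hb ih =>
    refine ih.trans ?_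
    obtain ⟨m, rfl⟩ : ∃ m, b = m + 1 := ⟨b - 1, by omega⟩
    have h1 := hN m (by omega)
    have h2 := pos_of_mul_pos_right h1 (by positivity)
    have h3 : (0 : ℝ) ≤ 24 ^ (m + 2) / (4 * (m + 2)).factorial := by positivity
    rw [p_eq, p_eq]
    linarith

end RD

theorem p_eventually_monotone_and_chain :
    (∃ N : ℕ, ∀ a b : ℕ, N ≤ a → a ≤ b → p a ≤ p b) ∧
    Filter.Tendsto p Filter.atTop (nhds (Real.exp (-4))) ∧
    p 13 < p 20 ∧ p 20 < p 50 ∧ p 50 < Real.exp (-4) := by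
  have h13 := RD.p13
  have h20 := RD.p20
  have h50 := RD.p50
  have he := RD.exp_bd
  norm_num at h13 h20 h50
  refine ⟨RD.p_mono, (RD.v_lim 0).congr fun n => (RD.p_eq n).symm, ?_, ?_, ?_⟩ <;> linarith
end
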